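/- arXiv:1602.08457 — 3 statements merged into one kernel-verified Lean document; each statement's English description precedes it below -/
import Mathlib

section
/- Let M ≥ 0, N ≥ 1, k ∈ I_{M,N} and r ∈ {1,…,N}. For every t ∈ ℂ^N such that θ(φ_{k;r'} e^{2 t_{r'}}) ≠ 0 for all r' ∈ {1,…,N} and θ(φ_{k;r} e^{2(t_r+τ)}) ≠ 0, one has Φ_k(t + τ e_r) = φ_{k;r} · Φ_k(t), where e_r is the r-th standard basis vector of ℂ^N. In particular the explicit theta quotient Φ_k solves the scalar difference equations Φ(t + τ e_r) = φ_{k;r} Φ(t) for r ∈ {1,…,N}. -/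
open Complex MeasureTheory

noncomputable section

namespace BQKZ

/-- `(z;p)_∞ = ∏_{m ≥ 0} (1 - z pᵐ)`; used with `p = q²`. -/
def poch (p z : ℂ) : ℂ := ∏' m : ℕ, (1 - z * p ^ m)

/-- renormalized Jacobi theta `θ(z) = (z;p)_∞ (p z⁻¹;p)_∞`, with `p = q²`. -/
def theta (p z : ℂ) : ℂ := poch p z * poch p (p * z⁻¹)

/-- `q² = e^{2τ}` where `q = e^τ`. -/
def qsq (τ : ℂ) : ℂ := exp (2 * τ)

/-- `ξ̃₊ = ξ₊ - η/2 - τ/2`. -/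
def xiP (τ η ξp : ℂ) : ℂ := ξp - η / 2 - τ / 2

/-- `ξ̃₋ = ξ₋ - η/2`. -/
def xiM (η ξm : ℂ) : ℂ := ξm - η / 2

/-- `n_k(r) = #{i : k i = r}`. -/
def nk {M N : ℕ} (k : Fin M → Fin N) (r : Fin N) : ℕ :=
  (Finset.univ.filter fun i => k i = r).card

/-- `φ_{k;r}`. -/
def phiC (η ξp ξm : ℂ) {N M : ℕ} (ℓ : Fin N → ℂ) (k : Fin M → Fin N) (r : Fin N) : ℂ :=
  (∏ i ∈ Finset.univ.filter fun i : Fin M => k i = r,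
      exp (2 * (η - ξp - ξm) +
        4 * ((M : ℂ) - ((i : ℕ) + 1) - ∑ s ∈ Finset.univ.filter fun s : Fin N => r ≤ s, ℓ s) * η)) *
    exp (-4 * ℓ r * η * ((Finset.univ.filter fun i : Fin M => r < k i).card : ℂ))

/-- `Φ_k(t)`. -/
def PhiF (τ η ξp ξm : ℂ) {N M : ℕ} (ℓ : Fin N → ℂ) (k : Fin M → Fin N) (t : Fin N → ℂ) : ℂ :=
  ∏ r, theta (qsq τ) (exp (2 * t r)) / theta (qsq τ) (phiC η ξp ξm ℓ k r * exp (2 * t r))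

/-- `F(x;t)`. -/
def Ffun (τ η : ℂ) {N : ℕ} (ℓ : Fin N → ℂ) (x : ℂ) (t : Fin N → ℂ) : ℂ :=
  ∏ s, (poch (qsq τ) (exp (-2 * (t s + x - ℓ s * η))) * poch (qsq τ) (exp (-2 * (t s - x - ℓ s * η)))) /
       (poch (qsq τ) (exp (-2 * (t s + x + ℓ s * η))) * poch (qsq τ) (exp (-2 * (t s - x + ℓ s * η))))

/-- `g(x)`. -/
def gfun (τ η ξp ξm : ℂ) (x : ℂ) : ℂ :=
  (poch (qsq τ) (qsq τ * exp (2 * (xiP τ η ξp - x))) * poch (qsq τ) (qsq τ * exp (2 * (xiM η ξm - x)))) /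
  (poch (qsq τ) (exp (2 * (-xiP τ η ξp - x))) * poch (qsq τ) (exp (2 * (-xiM η ξm - x))))

/-- `h(x)`. -/
def hfun (τ η : ℂ) (x : ℂ) : ℂ :=
  (1 - exp (-2 * x)) * poch (qsq τ) (qsq τ * exp (-2 * (x + η))) / poch (qsq τ) (exp (-2 * (x - η)))

/-- `ψ_{k;i}`. -/
def psiC (τ η ξp ξm : ℂ) {N M : ℕ} (ℓ : Fin N → ℂ) (k : Fin M → Fin N) (i : Fin M) : ℂ :=
  xiP τ η ξp + xiM η ξm + τ + ℓ (k i) * η +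
    2 * ((∑ s ∈ Finset.univ.filter fun s : Fin N => k i < s, ℓ s) - (M : ℂ) + ((i : ℕ) + 1)) * η

/-- `u_{k;i}(x;t)`. -/
def ufun (τ η ξp ξm : ℂ) {N M : ℕ} (ℓ : Fin N → ℂ) (k : Fin M → Fin N) (i : Fin M) (x : ℂ)
    (t : Fin N → ℂ) : ℂ :=
  exp (-t (k i)) * theta (qsq τ) (exp (2 * (x - t (k i) + psiC τ η ξp ξm ℓ k i))) *
    (∏ s ∈ Finset.univ.filter fun s : Fin N => k i < s,
      theta (qsq τ) (exp (2 * (x - t s - ℓ s * η)))) /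
    ∏ s ∈ Finset.univ.filter fun s : Fin N => k i ≤ s,
      theta (qsq τ) (exp (2 * (x - t s + ℓ s * η)))

/-- `w_k(x;t)/Φ_k(t)` (the weight function with the `Φ_k` prefactor cancelled). -/
def w0 (τ η ξp ξm : ℂ) {N M : ℕ} (ℓ : Fin N → ℂ) (k : Fin M → Fin N) (x : Fin M → ℂ)
    (t : Fin N → ℂ) : ℂ :=
  (∏ i, Ffun τ η ℓ (x i) t * gfun τ η ξp ξm (x i) * ufun τ η ξp ξm ℓ k i (x i) t) *
    ∏ p ∈ Finset.univ.filter fun p : Fin M × Fin M => p.1 < p.2,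
      hfun τ η (x p.1 + x p.2) * hfun τ η (x p.1 - x p.2)

/-- the weight function `w_k(x;t)`. -/
def wfun (τ η ξp ξm : ℂ) {N M : ℕ} (ℓ : Fin N → ℂ) (k : Fin M → Fin N) (x : Fin M → ℂ)
    (t : Fin N → ℂ) : ℂ :=
  PhiF τ η ξp ξm ℓ k t * w0 τ η ξp ξm ℓ k x t

/-- sign `ε_i = ±1` encoded by a boolean. -/
def sg {M : ℕ} (ε : Fin M → Bool) (i : Fin M) : ℂ := if ε i then 1 else -1

/-- `S_M k`: rearrangements of `k`. -/
def rearr {M N : ℕ} (k : Fin M → Fin N) : Finset (Fin M → Fin N) :=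
  Finset.univ.filter fun m => ∀ r, nk m r = nk k r

/-- `β_k(x;t)`, the coefficients of the boundary Bethe vectors. -/
def betaF (η ξm : ℂ) {N M : ℕ} (ℓ : Fin N → ℂ) (k : Fin M → Fin N) (x : Fin M → ℂ)
    (t : Fin N → ℂ) : ℂ :=
  exp ((∑ i, ((nk k (k i) : ℂ) / 2 - ℓ (k i))) * η) *
    ∑ m ∈ rearr k, ∑ ε : Fin M → Bool,
      (∏ i,
          sg ε i * sinh (sg ε i * x i - xiM η ξm) / sinh (t (m i) + sg ε i * x i - ℓ (m i) * η) *
            (∏ s ∈ Finset.univ.filter fun s : Fin N => m i < s,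
              sinh (t s + sg ε i * x i + ℓ s * η) / sinh (t s + sg ε i * x i - ℓ s * η)) *
            ∏ s, sinh (t s - sg ε i * x i + ℓ s * η) / sinh (t s - sg ε i * x i - ℓ s * η)) *
        (∏ p ∈ Finset.univ.filter fun p : Fin M × Fin M => p.1 < p.2,
          sinh (sg ε p.1 * x p.1 + sg ε p.2 * x p.2 + η) /
            sinh (sg ε p.1 * x p.1 + sg ε p.2 * x p.2)) *
        ∏ p ∈ Finset.univ.filter fun p : Fin M × Fin M => m p.1 < m p.2,
          sinh (sg ε p.1 * x p.1 - sg ε p.2 * x p.2 - η) /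
            sinh (sg ε p.1 * x p.1 - sg ε p.2 * x p.2)

/-- `(ℓ,η) ∈ D^k_{M,N}`. -/
def Dmn (η : ℂ) {N M : ℕ} (ℓ : Fin N → ℂ) (k : Fin M → Fin N) : Prop :=
  ∀ r, (ℓ r * η).re > max 0 (((nk k r : ℝ) - 1) / 2 * η.re)

/-- the (0-based) position `i_k(s;r) = ∑_{s' < r} n_k(s') + s`. -/
def blockIdx {M N : ℕ} (k : Fin M → Fin N) (r : Fin N) (s : ℕ) : ℕ :=
  (∑ s' ∈ Finset.univ.filter fun s' : Fin N => s' < r, nk k s') + s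

/-- `γ ∈ Γ^k_{M,N}`. -/
def Gam (η : ℂ) {N M : ℕ} (ℓ : Fin N → ℂ) (k : Fin M → Fin N) (γ : Fin M → ℂ) : Prop :=
  (∀ i, -(ℓ (k i) * η).re < (γ i).re ∧ (γ i).re < (ℓ (k i) * η).re) ∧
    ∀ r : Fin N, ∀ s : ℕ, s + 1 < nk k r →
      ∀ (h1 : blockIdx k r s < M) (h2 : blockIdx k r (s + 1) < M),
        (γ ⟨blockIdx k r (s + 1), h2⟩).re ≤ (γ ⟨blockIdx k r s, h1⟩).re ∧
          (γ ⟨blockIdx k r (s + 1), h2⟩).re + η.re < (γ ⟨blockIdx k r s, h1⟩).re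

/-- `γ ∈ Γ^k_{M,N;τ}`. -/
def GamTau (τ η : ℂ) {N M : ℕ} (ℓ : Fin N → ℂ) (k : Fin M → Fin N) (γ : Fin M → ℂ) : Prop :=
  Gam η ℓ k γ ∧
    (∀ i, -(ℓ (k i) * η + τ).re < (γ i).re ∧ (γ i).re < (ℓ (k i) * η + τ).re) ∧
    ∀ r : Fin N, ∀ s : ℕ, s + 1 < nk k r →
      ∀ (h1 : blockIdx k r s < M) (h2 : blockIdx k r (s + 1) < M),
        (γ ⟨blockIdx k r (s + 1), h2⟩).re + (η - τ).re < (γ ⟨blockIdx k r s, h1⟩).re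

/-- `Λ₊ = max_s Re(ℓ_s η)`. -/
def Lam (η : ℂ) {N : ℕ} (ℓ : Fin N → ℂ) : ℝ := ⨆ s, (ℓ s * η).re

/-- the sector `Ã`. -/
def Atil (τ η ξp ξm : ℂ) {N : ℕ} (ℓ : Fin N → ℂ) : Set (Fin N → ℂ) :=
  {t | (∀ i j : Fin N, (j : ℕ) = (i : ℕ) + 1 → (t i - t j).re > 2 * Lam η ℓ + max η.re 0) ∧
       ∀ i : Fin N, (i : ℕ) = N - 1 →
         (t i).re > Lam η ℓ + max (max (η / 2).re 0) (max (-xiP τ η ξp).re (-xiM η ξm).re)}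

/-- the sector `Ã_τ`. -/
def AtilTau (τ η ξp ξm : ℂ) {N : ℕ} (ℓ : Fin N → ℂ) : Set (Fin N → ℂ) :=
  {t | (∀ i j : Fin N, (j : ℕ) = (i : ℕ) + 1 →
          (t i - t j).re > 2 * Lam η ℓ + max η.re 0 - τ.re) ∧
       ∀ i : Fin N, (i : ℕ) = N - 1 →
         (t i).re > Lam η ℓ + max (max (η / 2).re 0) (max (-xiP τ η ξp).re (-xiM η ξm).re) - τ.re}

/-- the cone `Q₊ ⊂ ℤ^N` spanned by the simple roots `e_i - e_{i+1}` and `e_N`. -/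
def Qplus {N : ℕ} : Set (Fin N → ℤ) :=
  {α | ∃ β : Fin N → ℕ, ∀ j : Fin N,
    α j = (β j : ℤ) -
      if _h : 0 < (j : ℕ) then
        (β ⟨(j : ℕ) - 1, lt_of_le_of_lt (Nat.sub_le _ _) j.isLt⟩ : ℤ)
      else 0}

/-- the cube `[0,π]^M` over which the contour integrals are iterated. -/
def box (M : ℕ) : Set (Fin M → ℝ) := Set.univ.pi fun _ => Set.Icc (0 : ℝ) Real.pi

/-- the point of the contour `C^γ_k(t)` with parameters `s ∈ [0,π]^M`. -/
def cpt {M N : ℕ} (k : Fin M → Fin N) (γ : Fin M → ℂ) (t : Fin N → ℂ) (s : Fin M → ℝ) :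
    Fin M → ℂ := fun i => t (k i) + γ i + (s i : ℂ) * I

/-- the iterated contour integral over `C^γ_k(t)`. -/
def contourIntegral {M N : ℕ} (k : Fin M → Fin N) (γ : Fin M → ℂ) (t : Fin N → ℂ)
    (f : (Fin M → ℂ) → ℂ) : ℂ :=
  I ^ M * ∫ s in box M, f (cpt k γ t s)

/-- nonvanishing of all denominators occurring in `w_k(x;t)/Φ_k(t)`. -/
def w0DenomOK (τ η ξp ξm : ℂ) {N M : ℕ} (ℓ : Fin N → ℂ) (k : Fin M → Fin N) (x : Fin M → ℂ)
    (t : Fin N → ℂ) : Prop :=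
  (∀ s : Fin N, ∀ i : Fin M,
      poch (qsq τ) (exp (-2 * (t s + x i + ℓ s * η))) ≠ 0 ∧
      poch (qsq τ) (exp (-2 * (t s - x i + ℓ s * η))) ≠ 0) ∧
  (∀ i : Fin M,
      poch (qsq τ) (exp (2 * (-xiP τ η ξp - x i))) ≠ 0 ∧
      poch (qsq τ) (exp (2 * (-xiM η ξm - x i))) ≠ 0) ∧
  (∀ i : Fin M, ∀ s : Fin N, k i ≤ s → theta (qsq τ) (exp (2 * (x i - t s + ℓ s * η))) ≠ 0) ∧
  ∀ i j : Fin M, i < j →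
      poch (qsq τ) (exp (-2 * (x i + x j - η))) ≠ 0 ∧
      poch (qsq τ) (exp (-2 * (x i - x j - η))) ≠ 0

/-- nonvanishing of the theta denominators of `Φ_k(t)`. -/
def PhiDenomOK (τ η ξp ξm : ℂ) {N M : ℕ} (ℓ : Fin N → ℂ) (k : Fin M → Fin N)
    (t : Fin N → ℂ) : Prop :=
  ∀ r, theta (qsq τ) (phiC η ξp ξm ℓ k r * exp (2 * t r)) ≠ 0

/-- nonvanishing of all sinh denominators occurring in `β_m(x;t)` (for any rearrangement `m`). -/
def betaDenomOK (η : ℂ) {N M : ℕ} (ℓ : Fin N → ℂ) (x : Fin M → ℂ) (t : Fin N → ℂ) : Prop :=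
  (∀ s : Fin N, ∀ i : Fin M,
      sinh (t s + x i - ℓ s * η) ≠ 0 ∧ sinh (t s - x i - ℓ s * η) ≠ 0) ∧
  ∀ i j : Fin M, i < j → sinh (x i + x j) ≠ 0 ∧ sinh (x i - x j) ≠ 0

theorem multipliable_poch (p z : ℂ) (hp : ‖p‖ < 1) :
    Multipliable fun m : ℕ => (1 - z * p ^ m) := by
  have h : Summable fun m : ℕ => ‖-(z * p ^ m)‖ := by
    simp only [norm_neg, norm_mul, norm_pow]
    exact (summable_geometric_of_lt_one (norm_nonneg _) hp).mul_left _
  simpa [sub_eq_add_neg] using multipliable_one_add_of_summable h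

theorem poch_rec (p z : ℂ) (hp : ‖p‖ < 1) : poch p z = (1 - z) * poch p (p * z) := by
  unfold poch
  have e : (fun m : ℕ => 1 - z * p ^ (m + 1)) = fun m : ℕ => 1 - p * z * p ^ m := by
    funext m; ring
  rw [tprod_eq_zero_mul' (f := fun m : ℕ => 1 - z * p ^ m)]
  · rw [e]; simp
  · rw [e]; exact multipliable_poch p (p * z) hp

theorem theta_shift (p z : ℂ) (hp : ‖p‖ < 1) (hp0 : p ≠ 0) (hz : z ≠ 0) :
    theta p z = -z * theta p (p * z) := by
  unfold theta
  have e : p * (p * z)⁻¹ = z⁻¹ := by field_simp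
  rw [e, poch_rec p z hp, poch_rec p z⁻¹ hp]
  field_simp
  ring

theorem norm_qsq_lt_one (τ : ℂ) (hτ : τ.re < 0) : ‖qsq τ‖ < 1 := by
  unfold qsq
  rw [Complex.norm_exp, Real.exp_lt_one_iff]
  have h : (2 * τ).re = 2 * τ.re := by simp
  linarith

theorem phiC_ne_zero (η ξp ξm : ℂ) {N M : ℕ} (ℓ : Fin N → ℂ) (k : Fin M → Fin N) (r : Fin N) :
    phiC η ξp ξm ℓ k r ≠ 0 := by
  unfold phiC
  exact mul_ne_zero (Finset.prod_ne_zero_iff.mpr fun i _ => exp_ne_zero _) (exp_ne_zero _)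

/-- the explicit theta quotient `Φ_k` solves the scalar difference
equations `Φ(t + τ e_r) = φ_{k;r} Φ(t)`. -/
theorem stmt1 (τ η ξp ξm : ℂ) (hτ : τ.re < 0) (M N : ℕ) (hN : 1 ≤ N)
    (ℓ : Fin N → ℂ) (k : Fin M → Fin N) (hk : Monotone k) (r : Fin N) (t : Fin N → ℂ)
    (h1 : ∀ r' : Fin N, theta (qsq τ) (phiC η ξp ξm ℓ k r' * exp (2 * t r')) ≠ 0)
    (h2 : theta (qsq τ) (phiC η ξp ξm ℓ k r * exp (2 * (t r + τ))) ≠ 0) :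
    PhiF τ η ξp ξm ℓ k (fun s => t s + if s = r then τ else 0) =
      phiC η ξp ξm ℓ k r * PhiF τ η ξp ξm ℓ k t := by
  have hp := norm_qsq_lt_one τ hτ
  have hp0 : qsq τ ≠ 0 := exp_ne_zero _
  have hφ := phiC_ne_zero η ξp ξm ℓ k r
  have he : exp (2 * t r) ≠ 0 := exp_ne_zero _
  have es : exp (2 * (t r + τ)) = qsq τ * exp (2 * t r) := by
    unfold qsq
    rw [← Complex.exp_add]
    congr 1
    ring
  have ep : phiC η ξp ξm ℓ k r * exp (2 * (t r + τ)) =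
      qsq τ * (phiC η ξp ξm ℓ k r * exp (2 * t r)) := by
    rw [es]; ring
  have hd := h1 r
  unfold PhiF
  rw [← Finset.mul_prod_erase Finset.univ _ (Finset.mem_univ r),
    ← Finset.mul_prod_erase Finset.univ
      (fun r => theta (qsq τ) (exp (2 * t r)) / theta (qsq τ) (phiC η ξp ξm ℓ k r * exp (2 * t r)))
      (Finset.mem_univ r), ← mul_assoc]
  congr 1
  · simp only [if_true]
    rw [ep] at h2 ⊢
    rw [es, theta_shift _ (exp (2 * t r)) hp hp0 he,
      theta_shift _ (phiC η ξp ξm ℓ k r * exp (2 * t r)) hp hp0 (mul_ne_zero hφ he)]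
    field_simp
  · refine Finset.prod_congr rfl fun s hs => ?_
    simp [Finset.ne_of_mem_erase hs]

end BQKZ
end
end

section
/- Let M ≥ 0, N ≥ 1, k ∈ I_{M,N} and r ∈ {1,…,N}. Then n_k(r) · (2 ∑_{s>r} n_k(s) + n_k(r) − 1) = 2 · ∑_{i=1, k_i=r}^{M} (M − i), i.e. twice the sum of M − i over all indices i with k_i = r. -/
open Complex MeasureTheory

noncomputable section

namespace BQKZ

/-- `n_k(r)·(2 ∑_{s>r} n_k(s) + n_k(r) − 1) = 2 ∑_{i : k_i = r} (M − i)`. -/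
theorem stmt2 (M N : ℕ) (hN : 1 ≤ N) (k : Fin M → Fin N) (hk : Monotone k) (r : Fin N) :
    (nk k r : ℤ) *
        (2 * (∑ s ∈ Finset.univ.filter fun s : Fin N => r < s, (nk k s : ℤ)) + (nk k r : ℤ) - 1) =
      2 * ∑ i ∈ Finset.univ.filter fun i : Fin M => k i = r, ((M : ℤ) - ((i : ℕ) + 1)) := by
  set A := Finset.univ.filter fun i : Fin M => k i = r with hA
  set B := Finset.univ.filter fun i : Fin M => r < k i with hB
  have hn : (nk k r : ℤ) = (A.card : ℤ) := rfl
  have hS : (∑ s ∈ Finset.univ.filter fun s : Fin N => r < s, (nk k s : ℤ)) = (B.card : ℤ) := by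
    rw [Finset.card_eq_sum_card_fiberwise (f := k) (s := B)
      (t := Finset.univ.filter fun s : Fin N => r < s)]
    · push_cast
      refine Finset.sum_congr rfl fun s hs => ?_
      have hs' : r < s := by simpa using hs
      unfold nk
      congr 2
      ext i
      simp only [hB, Finset.mem_filter, Finset.mem_univ, true_and]
      constructor
      · intro h
        exact ⟨h ▸ hs', h⟩
      · exact fun h => h.2
    · intro i hi
      simpa [hB] using hi
  have hterm : ∀ i ∈ A, ((M : ℤ) - ((i : ℕ) + 1)) =
      (∑ j ∈ A, if i < j then (1 : ℤ) else 0) + (B.card : ℤ) := by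
    intro i hi
    have hki : k i = r := by simpa [hA] using hi
    have h1 : ((M : ℤ) - ((i : ℕ) + 1)) = ((Finset.Ioi i).card : ℤ) := by
      rw [Fin.card_Ioi]
      have := i.isLt
      omega
    have h2 : Finset.Ioi i = (A.filter fun j => i < j) ∪ B := by
      ext j
      simp only [hA, hB, Finset.mem_Ioi, Finset.mem_union, Finset.mem_filter, Finset.mem_univ,
        true_and]
      constructor
      · intro h
        have := hk h.le
        rw [hki] at this
        rcases this.eq_or_lt with e | e
        · exact Or.inl ⟨e.symm, h⟩
        · exact Or.inr e
      · rintro (h | h)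
        · exact h.2
        · by_contra hc
          have := hk (not_lt.mp hc)
          rw [hki] at this
          exact absurd h (not_lt.mpr this)
    have h3 : Disjoint (A.filter fun j => i < j) B := by
      rw [Finset.disjoint_left]
      intro j hj hj'
      simp only [hA, hB, Finset.mem_filter, Finset.mem_univ, true_and] at hj hj'
      rw [hj.1] at hj'
      exact lt_irrefl _ hj'
    rw [h1, h2, Finset.card_union_of_disjoint h3, Finset.sum_boole]
    push_cast
    rfl
  rw [hn, hS, Finset.sum_congr rfl hterm, Finset.sum_add_distrib, Finset.sum_const, nsmul_eq_mul]
  have hT : (∑ i ∈ A, ∑ j ∈ A, if i < j then (1 : ℤ) else 0) +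
      (∑ i ∈ A, ∑ j ∈ A, if i < j then (1 : ℤ) else 0) = (A.card : ℤ) * A.card - A.card := by
    conv_lhs =>
      arg 1
      rw [Finset.sum_comm]
    rw [← Finset.sum_add_distrib]
    have : ∀ i ∈ A, ((∑ j ∈ A, if j < i then (1 : ℤ) else 0) +
        ∑ j ∈ A, if i < j then (1 : ℤ) else 0) = (A.card : ℤ) - 1 := by
      intro i hi
      rw [← Finset.sum_add_distrib]
      have h : ∀ j ∈ A, ((if j < i then (1 : ℤ) else 0) + if i < j then (1 : ℤ) else 0) =
          1 - if i = j then 1 else 0 := by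
        intro j _
        rcases lt_trichotomy i j with h | h | h
        · simp [h, h.not_gt, h.ne]
        · simp [h]
        · simp [h, h.not_gt, h.ne']
      rw [Finset.sum_congr rfl h, Finset.sum_sub_distrib, Finset.sum_ite_eq, if_pos hi]
      simp
    rw [Finset.sum_congr rfl this, Finset.sum_const, nsmul_eq_mul]
    ring
  linear_combination -hT

end BQKZ
end
end

section
/- Let M ≥ 0, N ≥ 1, ℓ ∈ ℂ^N, k ∈ I_{M,N}, i ∈ {1,…,M}, x ∈ ℂ and t ∈ ℂ^N. At every point where all theta factors in the denominators of u_{k;i}(x;t) and u_{k;i}(x−τ;t) are nonzero, one has u_{k;i}(x − τ; t) = q² e^{2(ξ̃₊ + ξ̃₋) − 4(M − i)η} · u_{k;i}(x; t). -/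
open Complex MeasureTheory

noncomputable section

namespace BQKZ

lemma poch_step (p z : ℂ) (hp : ‖p‖ < 1) : poch p z = (1 - z) * poch p (z * p) := by
  have hs : ∀ w : ℂ, Multipliable fun m : ℕ => (1 - w * p ^ m) := by
    intro w
    have h : Summable fun m : ℕ => ‖-(w * p ^ m)‖ := by
      simp only [norm_neg, norm_mul, norm_pow]
      exact (summable_geometric_of_lt_one (norm_nonneg _) hp).mul_left _
    simpa [sub_eq_add_neg] using multipliable_one_add_of_summable h
  unfold poch
  have h1 : Multipliable fun m : ℕ => (1 - z * p ^ (m + 1)) := by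
    have h2 : (fun m : ℕ => (1 - z * p ^ (m + 1))) = fun m : ℕ => (1 - z * p * p ^ m) := by
      funext m
      rw [pow_succ', mul_assoc]
    rw [h2]
    exact hs (z * p)
  have h3 : ∏' m : ℕ, (1 - z * p ^ m) = (1 - z * p ^ 0) * ∏' m : ℕ, (1 - z * p ^ (m + 1)) :=
    tprod_eq_zero_mul' (f := fun m : ℕ => (1 - z * p ^ m)) h1
  rw [h3, pow_zero, mul_one]
  have h4 : ∀ m : ℕ, z * p ^ (m + 1) = z * p * p ^ m := fun m => by rw [pow_succ', mul_assoc]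
  simp only [h4]

lemma theta_shift_s10 (τ : ℂ) (hτ : τ.re < 0) (y : ℂ) :
    theta (qsq τ) (exp (2 * (y - τ))) = -exp (2 * (y - τ)) * theta (qsq τ) (exp (2 * y)) := by
  have hp : ‖qsq τ‖ < 1 := by
    unfold qsq
    rw [Complex.norm_exp]
    have : (2 * τ).re = 2 * τ.re := by simp
    rw [this, Real.exp_lt_one_iff]
    linarith
  have hz : exp (2 * y) = exp (2 * (y - τ)) * qsq τ := by
    unfold qsq
    rw [← Complex.exp_add]
    congr 1
    ring
  have hp0 : qsq τ ≠ 0 := Complex.exp_ne_zero _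
  have hw : exp (2 * (y - τ)) ≠ 0 := Complex.exp_ne_zero _
  rw [hz]
  generalize exp (2 * (y - τ)) = w at *
  generalize qsq τ = p at *
  unfold theta
  have e : p * (w * p)⁻¹ = w⁻¹ := by field_simp
  rw [e, poch_step p w hp, poch_step p w⁻¹ hp, mul_comm p w⁻¹]
  field_simp
  ring

/-- functional equation for `u_{k;i}(x − τ; t)`. -/
theorem stmt10 (τ η ξp ξm : ℂ) (hτ : τ.re < 0) (M N : ℕ) (hN : 1 ≤ N)
    (ℓ : Fin N → ℂ) (k : Fin M → Fin N) (hk : Monotone k) (i : Fin M)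
    (x : ℂ) (t : Fin N → ℂ)
    (h1 : ∀ s : Fin N, k i ≤ s → theta (qsq τ) (exp (2 * (x - t s + ℓ s * η))) ≠ 0)
    (h2 : ∀ s : Fin N, k i ≤ s → theta (qsq τ) (exp (2 * ((x - τ) - t s + ℓ s * η))) ≠ 0) :
    ufun τ η ξp ξm ℓ k i (x - τ) t =
      qsq τ * exp (2 * (xiP τ η ξp + xiM η ξm) - 4 * ((M : ℂ) - ((i : ℕ) + 1)) * η) *
        ufun τ η ξp ξm ℓ k i x t := by
  have ht : ∀ y : ℂ, theta (qsq τ) (exp (2 * (y - τ))) =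
      -exp (2 * (y - τ)) * theta (qsq τ) (exp (2 * y)) := theta_shift_s10 τ hτ
  have hins : (Finset.univ.filter fun s : Fin N => k i ≤ s) =
      insert (k i) (Finset.univ.filter fun s : Fin N => k i < s) := by
    ext s
    simp only [Finset.mem_filter, Finset.mem_univ, true_and, Finset.mem_insert]
    rw [le_iff_eq_or_lt, eq_comm]
  have hnot : k i ∉ (Finset.univ.filter fun s : Fin N => k i < s) := by simp
  have e0 : theta (qsq τ) (exp (2 * (x - τ - t (k i) + psiC τ η ξp ξm ℓ k i))) =
      -exp (2 * (x - t (k i) + psiC τ η ξp ξm ℓ k i - τ)) *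
        theta (qsq τ) (exp (2 * (x - t (k i) + psiC τ η ξp ξm ℓ k i))) := by
    rw [← ht]
    congr 3
    ring
  have e1 : ∀ s, theta (qsq τ) (exp (2 * (x - τ - t s - ℓ s * η))) =
      -exp (2 * (x - t s + ℓ s * η - τ)) * exp (-4 * (ℓ s * η)) *
        theta (qsq τ) (exp (2 * (x - t s - ℓ s * η))) := by
    intro s
    rw [neg_mul, ← Complex.exp_add]
    have a1 : x - τ - t s - ℓ s * η = x - t s - ℓ s * η - τ := by ring
    have a2 : 2 * (x - t s + ℓ s * η - τ) + -4 * (ℓ s * η) = 2 * (x - t s - ℓ s * η - τ) := by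
      ring
    rw [a1, a2, ht, neg_mul]
  have e2 : ∀ s, theta (qsq τ) (exp (2 * (x - τ - t s + ℓ s * η))) =
      -exp (2 * (x - t s + ℓ s * η - τ)) *
        theta (qsq τ) (exp (2 * (x - t s + ℓ s * η))) := by
    intro s
    rw [← ht]
    congr 3
    ring
  unfold ufun
  rw [hins, Finset.prod_insert hnot, Finset.prod_insert hnot, e0]
  simp only [e1, e2, Finset.prod_mul_distrib]
  rw [← Complex.exp_sum, ← Finset.mul_sum, ← Finset.sum_mul]
  have hP : ∏ s ∈ Finset.univ.filter (fun s : Fin N => k i < s),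
      -exp (2 * (x - t s + ℓ s * η - τ)) ≠ 0 :=
    Finset.prod_ne_zero_iff.mpr fun s _ => neg_ne_zero.mpr (Complex.exp_ne_zero _)
  have hA : theta (qsq τ) (exp (2 * (x - t (k i) + ℓ (k i) * η))) ≠ 0 := h1 _ le_rfl
  have hB : ∏ s ∈ Finset.univ.filter (fun s : Fin N => k i < s),
      theta (qsq τ) (exp (2 * (x - t s + ℓ s * η))) ≠ 0 := by
    refine Finset.prod_ne_zero_iff.mpr fun s hs => h1 s ?_
    exact (Finset.mem_filter.mp hs).2.le
  have hE : exp (2 * (x - t (k i) + psiC τ η ξp ξm ℓ k i - τ)) *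
      exp (-4 * ((∑ s ∈ Finset.univ.filter (fun s : Fin N => k i < s), ℓ s) * η)) =
      qsq τ * exp (2 * (xiP τ η ξp + xiM η ξm) - 4 * ((M : ℂ) - ((i : ℕ) + 1)) * η) *
        exp (2 * (x - t (k i) + ℓ (k i) * η - τ)) := by
    unfold qsq psiC
    simp only [← Complex.exp_add]
    congr 1
    ring
  have hC : exp (2 * (x - t (k i) + ℓ (k i) * η - τ)) ≠ 0 := Complex.exp_ne_zero _
  generalize theta (qsq τ) (exp (2 * (x - t (k i) + ℓ (k i) * η))) = A at *
  generalize ∏ s ∈ Finset.univ.filter (fun s : Fin N => k i < s),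
      theta (qsq τ) (exp (2 * (x - t s + ℓ s * η))) = B at *
  generalize ∏ s ∈ Finset.univ.filter (fun s : Fin N => k i < s),
      -exp (2 * (x - t s + ℓ s * η - τ)) = P at *
  generalize ∏ s ∈ Finset.univ.filter (fun s : Fin N => k i < s),
      theta (qsq τ) (exp (2 * (x - t s - ℓ s * η))) = Q at *
  generalize theta (qsq τ) (exp (2 * (x - t (k i) + psiC τ η ξp ξm ℓ k i))) = R at *
  generalize exp (2 * (x - t (k i) + psiC τ η ξp ξm ℓ k i - τ)) = E at *
  generalize exp (-4 * ((∑ s ∈ Finset.univ.filter (fun s : Fin N => k i < s), ℓ s) * η)) = S at *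
  generalize exp (2 * (x - t (k i) + ℓ (k i) * η - τ)) = C at *
  generalize qsq τ * exp (2 * (xiP τ η ξp + xiM η ξm) - 4 * ((M : ℂ) - ((i : ℕ) + 1)) * η) = D at *
  generalize exp (-t (k i)) = T
  rw [← mul_div_assoc, div_eq_div_iff
    (mul_ne_zero (mul_ne_zero (neg_ne_zero.mpr hC) hA) (mul_ne_zero hP hB)) (mul_ne_zero hA hB)]
  linear_combination (-T * R * P * Q * A * B) * hE

end BQKZ
end
end
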